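/- There exist constants c > 0 and C ≥ 1 such that for every integer n ≥ 2 and every integer α ≥ 1 there is an instance (J',M') of P||C_max with at most C·α·n jobs, at most C·α·n machines, and processing times p_j ∈ {1,2}, such that the polytope Q̃ = conv{ x^σ : σ is a schedule of (J',M') with makespan at most α·opt(J',M') } satisfies xc(Q̃) ≥ 2^{c·n/log n}. -/

import Mathlib

open Finset

noncomputable section

/-- An extended formulation of size `k` (number of inequalities) for `P ⊆ ℝ^ι`. -/
def IsEF {ι : Type} [Fintype ι] (P : Set (ι → ℝ)) (k : ℕ) : Prop :=
  ∃ (e l : ℕ) (A : Matrix (Fin k) (Fin e) ℝ) (b : Fin k → ℝ)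
    (C : Matrix (Fin l) (Fin e) ℝ) (d : Fin l → ℝ)
    (π : (Fin e → ℝ) →ᵃ[ℝ] (ι → ℝ)),
    π '' {y | (∀ r, A.mulVec y r ≤ b r) ∧ (∀ r, C.mulVec y r = d r)} = P

/-- The extension complexity of `P`. -/
noncomputable def xc {ι : Type} [Fintype ι] (P : Set (ι → ℝ)) : ℕ :=
  sInf {k | IsEF P k}

/-- The load of machine `i` under schedule `σ`. -/
def load {n m : ℕ} (p : Fin n → ℕ) (σ : Fin n → Fin m) (i : Fin m) : ℕ :=
  ∑ j, if σ j = i then p j else 0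

/-- The makespan of a schedule: the maximum machine load. -/
def makespan {n m : ℕ} (p : Fin n → ℕ) (σ : Fin n → Fin m) : ℕ :=
  Finset.univ.sup (load p σ)

/-- The optimal makespan of the instance. -/
noncomputable def optMakespan (n m : ℕ) (p : Fin n → ℕ) : ℕ :=
  sInf {t | ∃ σ : Fin n → Fin m, makespan p σ = t}

/-- The 0/1 assignment vector of a schedule, indexed by machine-job pairs. -/
def assignVec {n m : ℕ} (σ : Fin n → Fin m) : Fin m × Fin n → ℝ :=
  fun q => if σ q.2 = q.1 then 1 else 0

/-- `Q(J,M)`: the convex hull of the assignment vectors of all schedules. -/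
def Qpoly (n m : ℕ) : Set (Fin m × Fin n → ℝ) :=
  convexHull ℝ {x | ∃ σ : Fin n → Fin m, x = assignVec σ}

/-- `P(J,M)`: the convex hull of all points `(x^σ, T)` where `σ` is a schedule and the
natural number `T` upper-bounds every machine load; the `T`-coordinate is the `none`
coordinate of the ambient space `ℝ^(Option (M × J))`. -/
def Ppoly (n m : ℕ) (p : Fin n → ℕ) : Set (Option (Fin m × Fin n) → ℝ) :=
  convexHull ℝ {z | ∃ (σ : Fin n → Fin m) (t : ℕ), (∀ i, load p σ i ≤ t) ∧
    z = fun q => Option.elim q (t : ℝ) (fun ij => assignVec σ ij)}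

section CubeInfluence

/-- The `±1` character of a Boolean value. -/
def boolSign (b : Bool) : ℝ := if b then -1 else 1

lemma sum_exp_signed_le {ι : Type*} [Fintype ι] [DecidableEq ι] (c : ι → ℝ)
    (hc : ∀ i, |c i| = 1) (t : ℝ) :
    ∑ x : ι → Bool, Real.exp (t * ∑ i, c i * boolSign (x i)) ≤
      2 ^ Fintype.card ι * Real.exp (t ^ 2 * Fintype.card ι / 2) := by
  have h1 : ∀ x : ι → Bool, Real.exp (t * ∑ i, c i * boolSign (x i)) =
      ∏ i, Real.exp (t * (c i * boolSign (x i))) := by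
    intro x
    rw [Finset.mul_sum, Real.exp_sum]
  have h2 : ∑ x : ι → Bool, Real.exp (t * ∑ i, c i * boolSign (x i)) =
      ∏ i, ∑ b : Bool, Real.exp (t * (c i * boolSign b)) := by
    rw [Finset.prod_univ_sum, Fintype.piFinset_univ]
    exact Finset.sum_congr rfl fun x _ => h1 x
  have h3 : ∀ i, ∑ b : Bool, Real.exp (t * (c i * boolSign b)) ≤ 2 * Real.exp (t ^ 2 / 2) := by
    intro i
    have h4 : ∑ b : Bool, Real.exp (t * (c i * boolSign b)) = 2 * Real.cosh (t * c i) := by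
      simp [boolSign, Real.cosh_eq]
      ring
    have h5 : (t * c i) ^ 2 = t ^ 2 := by
      rw [mul_pow, ← sq_abs (c i), hc i]
      ring
    have h6 := Real.cosh_le_exp_half_sq (t * c i)
    rw [h5] at h6
    rw [h4]
    linarith
  rw [h2]
  calc ∏ i, ∑ b : Bool, Real.exp (t * (c i * boolSign b))
      ≤ ∏ _i : ι, 2 * Real.exp (t ^ 2 / 2) :=
        Finset.prod_le_prod (fun i _ => Finset.sum_nonneg fun b _ => (Real.exp_pos _).le)
          fun i _ => h3 i
    _ = 2 ^ Fintype.card ι * Real.exp (t ^ 2 * Fintype.card ι / 2) := by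
        rw [Finset.prod_const, mul_pow, Finset.card_univ, ← Real.exp_nat_mul]
        congr 2
        ring

/-- The total level-one influence of a bounded function on the cube is small relative to its mass,
up to an exponentially small error. -/
lemma sum_abs_influence_le {ι : Type*} [Fintype ι] [DecidableEq ι] (f : (ι → Bool) → ℝ) (B t : ℝ)
    (h0 : ∀ x, 0 ≤ f x) (hB : ∀ x, f x ≤ B) (ht : 0 < t) :
    ∑ i, |∑ x, boolSign (x i) * f x| ≤ t * Fintype.card ι * ∑ x, f x +
      B / t * Real.exp (-(t ^ 2 * Fintype.card ι / 2)) * 2 ^ Fintype.card ι := by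
  set n : ℝ := ((Fintype.card ι : ℕ) : ℝ)
  have hB0 : 0 ≤ B := (h0 fun _ => false).trans (hB _)
  let c : ι → ℝ := fun i => if 0 ≤ ∑ x, boolSign (x i) * f x then 1 else -1
  have hc : ∀ i, |c i| = 1 := by
    intro i
    simp only [c]
    split_ifs <;> simp
  have habs : ∀ i, |∑ x, boolSign (x i) * f x| = c i * ∑ x, boolSign (x i) * f x := by
    intro i
    simp only [c]
    split_ifs with h
    · rw [abs_of_nonneg h, one_mul]
    · rw [abs_of_neg (not_le.1 h), neg_one_mul]
  let L : (ι → Bool) → ℝ := fun x => ∑ i, c i * boolSign (x i)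
  have hswap : ∑ i, |∑ x, boolSign (x i) * f x| = ∑ x, f x * L x := by
    simp_rw [habs, L, Finset.mul_sum]
    rw [Finset.sum_comm]
    exact Finset.sum_congr rfl fun x _ => Finset.sum_congr rfl fun i _ => by ring
  have hL : ∀ x, L x ≤ t * n + 1 / t * (Real.exp (t * L x) * Real.exp (-(t ^ 2 * n))) := by
    intro x
    have h := Real.add_one_le_exp (t * (L x - t * n))
    rw [← Real.exp_add]
    have h2 : t * L x + -(t ^ 2 * n) = t * (L x - t * n) := by ring
    rw [h2]
    have h3 : t * (L x - t * n) ≤ Real.exp (t * (L x - t * n)) := by linarith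
    have h4 : L x - t * n ≤ 1 / t * Real.exp (t * (L x - t * n)) := by
      rw [one_div, ← div_eq_inv_mul, le_div_iff₀ ht]
      linarith
    linarith
  have hexp := sum_exp_signed_le c hc t
  rw [hswap]
  calc ∑ x, f x * L x
      ≤ ∑ x, (t * n * f x + B / t * Real.exp (-(t ^ 2 * n)) * Real.exp (t * L x)) := by
        refine Finset.sum_le_sum fun x _ => ?_
        have e1 := mul_le_mul_of_nonneg_left (hL x) (h0 x)
        have e2 : f x * (1 / t * (Real.exp (t * L x) * Real.exp (-(t ^ 2 * n)))) ≤
            B * (1 / t * (Real.exp (t * L x) * Real.exp (-(t ^ 2 * n)))) :=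
          mul_le_mul_of_nonneg_right (hB x) (by positivity)
        calc f x * L x ≤ t * n * f x +
              B * (1 / t * (Real.exp (t * L x) * Real.exp (-(t ^ 2 * n)))) := by linarith
          _ = _ := by ring
    _ = t * n * ∑ x, f x + B / t * Real.exp (-(t ^ 2 * n)) * ∑ x, Real.exp (t * L x) := by
        rw [Finset.sum_add_distrib, Finset.mul_sum, Finset.mul_sum]
    _ ≤ t * n * ∑ x, f x + B / t * Real.exp (-(t ^ 2 * n)) *
          (2 ^ Fintype.card ι * Real.exp (t ^ 2 * n / 2)) := by
        gcongr
    _ = _ := by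
        have : Real.exp (-(t ^ 2 * n / 2)) =
            Real.exp (-(t ^ 2 * n)) * Real.exp (t ^ 2 * n / 2) := by
          rw [← Real.exp_add]
          congr 1
          ring
        rw [this]
        ring

/-- If a finite group moves one coordinate of a family of functions on the cube to every other
coordinate, then on average over the group that coordinate has small influence. -/
lemma sum_group_abs_influence_le {ι G : Type*} [Fintype ι] [DecidableEq ι] [Fintype G] [Group G]
    (o : ι) (g : G → (ι → Bool) → ℝ) (τ : ι → G)
    (hτ : ∀ i p x, g (τ i * p) x = g p (x ∘ Equiv.swap o i)) (B t : ℝ)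
    (h0 : ∀ p x, 0 ≤ g p x) (hB : ∀ p x, g p x ≤ B) (ht : 0 < t) :
    ∑ p, |∑ x, boolSign (x o) * g p x| ≤ t * ∑ p, ∑ x, g p x +
      Fintype.card G * (B / t * Real.exp (-(t ^ 2 * Fintype.card ι / 2)) *
        2 ^ Fintype.card ι / Fintype.card ι) := by
  have hcard : (0 : ℝ) < Fintype.card ι := by
    have : 0 < Fintype.card ι := Fintype.card_pos_iff.2 ⟨o⟩
    exact_mod_cast this
  have hmove : ∀ i, ∑ p, |∑ x, boolSign (x o) * g p x| = ∑ p, |∑ x, boolSign (x i) * g p x| := by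
    intro i
    rw [← Equiv.sum_comp (Equiv.mulLeft (τ i))]
    refine Finset.sum_congr rfl fun p _ => ?_
    congr 1
    rw [← Equiv.sum_comp (Equiv.arrowCongr (Equiv.swap o i) (Equiv.refl Bool))]
    refine Finset.sum_congr rfl fun x _ => ?_
    simp only [Equiv.coe_mulLeft, hτ]
    congr 2
    · simp [Equiv.arrowCongr]
    · ext j
      simp [Equiv.arrowCongr]
  have hsum : Fintype.card ι * ∑ p, |∑ x, boolSign (x o) * g p x| =
      ∑ p, ∑ i, |∑ x, boolSign (x i) * g p x| := by
    rw [Finset.sum_comm, ← Finset.sum_congr rfl fun i _ => hmove i]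
    simp
  have hle : ∑ p, ∑ i, |∑ x, boolSign (x i) * g p x| ≤
      ∑ p, (t * Fintype.card ι * ∑ x, g p x +
        B / t * Real.exp (-(t ^ 2 * Fintype.card ι / 2)) * 2 ^ Fintype.card ι) :=
    Finset.sum_le_sum fun p _ => sum_abs_influence_le (g p) B t (h0 p) (hB p) ht
  rw [← hsum, Finset.sum_add_distrib, ← Finset.mul_sum, Finset.sum_const, Finset.card_univ,
    nsmul_eq_mul] at hle
  rw [← mul_le_mul_iff_right₀ hcard]
  refine hle.trans (le_of_eq ?_)
  field_simp

end CubeInfluence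

section CrossingCount

variable {V : Type} [Fintype V]

/-- Number of points that the map `φ` moves across the cut `U`. -/
def crossCount (U : V → Bool) (φ : V → V) : ℕ := ∑ v, if U (φ v) = U v then 0 else 1

/-- Conjugation of a self-map by a permutation. -/
def conjMap (p : Equiv.Perm V) (φ : V → V) : V → V := fun v => p.symm (φ (p v))

/-- A cut with an odd number of points on the `true` side. -/
def OddCut (U : V → Bool) : Prop := Odd (∑ v, (U v).toNat)

/-- A self-map merging points at most in pairs, with an injection from `P` into the points
outside its range. -/
def PairMerging (P : Type) (φ : V → V) : Prop :=
  (∃ g : V → V, ∀ v w, φ v = φ w → w = v ∨ w = g v) ∧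
    ∃ f : P → V, Function.Injective f ∧ ∀ q v, f q ≠ φ v

omit [Fintype V] in
lemma conjMap_mul (p q : Equiv.Perm V) (φ : V → V) :
    conjMap (q * p) φ = conjMap p (conjMap q φ) := by
  ext v
  simp [conjMap, ← Equiv.Perm.inv_def]

omit [Fintype V] in
lemma conjMap_eq_of_semiconj {p : Equiv.Perm V} {φ ψ : V → V} (h : ∀ v, φ (p v) = p (ψ v)) :
    conjMap p φ = ψ := by
  ext v
  simp [conjMap, h]

lemma crossCount_conjMap (p : Equiv.Perm V) (U : V → Bool) (φ : V → V) :
    crossCount (U ∘ p) (conjMap p φ) = crossCount U φ := by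
  unfold crossCount conjMap
  rw [← Equiv.sum_comp p fun v => if U (φ v) = U v then 0 else 1]
  simp

lemma OddCut.comp_perm {U : V → Bool} (h : OddCut U) (p : Equiv.Perm V) : OddCut (U ∘ p) := by
  unfold OddCut at h ⊢
  rw [← Equiv.sum_comp p] at h
  exact h

omit [Fintype V] in
lemma PairMerging.conjMap {P : Type} {φ : V → V} (h : PairMerging P φ) (p : Equiv.Perm V) :
    PairMerging P (_root_.conjMap p φ) := by
  obtain ⟨⟨g, hg⟩, f, hf, hfφ⟩ := h
  refine ⟨⟨fun v => p.symm (g (p v)), fun v w hvw => ?_⟩, fun q => p.symm (f q),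
    p.symm.injective.comp hf, fun q v hqv => hfφ q (p v) (p.symm.injective hqv)⟩
  rcases hg _ _ (p.symm.injective hvw) with h | h
  · exact Or.inl (p.injective h)
  · refine Or.inr ?_
    change w = p.symm (g (p v))
    rw [← h, Equiv.symm_apply_apply]

lemma crossCount_le_card (U : V → Bool) (φ : V → V) : crossCount U φ ≤ Fintype.card V := by
  unfold crossCount
  calc ∑ v, (if U (φ v) = U v then 0 else 1) ≤ ∑ _v : V, 1 :=
        Finset.sum_le_sum fun v _ => by split_ifs <;> simp
    _ = Fintype.card V := by simp

end CrossingCount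

section Template

/-- The pairs of vertices of the template with `2 * m + 1` pairs on the first side and `m + 1`
pairs on the second side, besides three core pairs. -/
abbrev TplPair (m : ℕ) : Type := Fin 3 ⊕ Option (Fin m ⊕ Fin m) ⊕ Option (Fin m)

/-- The vertices of the template. -/
abbrev TplVertex (m : ℕ) : Type := TplPair m × Bool

instance (m : ℕ) : DecidableEq (TplPair m) := inferInstance

variable {m : ℕ}

/-- The cut containing one vertex of each core pair, and the first-side pairs selected by `x`. -/
def tplSet (x : Option (Fin m) → Bool) : TplVertex m → Bool
  | (.inl _, b) => !b
  | (.inr (.inl none), _) => x none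
  | (.inr (.inl (some (.inl i))), _) => x (some i)
  | (.inr (.inl (some (.inr _))), _) => false
  | (.inr (.inr _), _) => false

/-- The map merging vertices in pairs; `z` selects for each second-side pair whether it is merged
internally or with a first-side pair. -/
def tplMap (z : Option (Fin m) → Bool) : TplVertex m → TplVertex m
  | (.inl j, _) => (.inl j, false)
  | (.inr (.inl none), b) => (.inr (.inl none), b && z none)
  | (.inr (.inl (some (.inl i))), _) => (.inr (.inl (some (.inl i))), false)
  | (.inr (.inl (some (.inr i))), b) => (.inr (.inl (some (.inr i))), b && z (some i))
  | (.inr (.inr none), b) =>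
      if z none then (.inr (.inl none), b) else (.inr (.inr none), false)
  | (.inr (.inr (some i)), b) =>
      if z (some i) then (.inr (.inl (some (.inr i))), b) else (.inr (.inr (some i)), false)

/-- The partner of each vertex under `tplMap z`. -/
def tplPartner (z : Option (Fin m) → Bool) : TplVertex m → TplVertex m
  | (.inl j, b) => (.inl j, !b)
  | (.inr (.inl none), b) =>
      if z none then (.inr (.inr none), b) else (.inr (.inl none), !b)
  | (.inr (.inl (some (.inl i))), b) => (.inr (.inl (some (.inl i))), !b)
  | (.inr (.inl (some (.inr i))), b) =>
      if z (some i) then (.inr (.inr (some i)), b) else (.inr (.inl (some (.inr i))), !b)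
  | (.inr (.inr none), b) =>
      if z none then (.inr (.inl none), b) else (.inr (.inr none), !b)
  | (.inr (.inr (some i)), b) =>
      if z (some i) then (.inr (.inl (some (.inr i))), b) else (.inr (.inr (some i)), !b)

/-- An enumeration of the vertices outside the range of `tplMap z`. -/
def tplFree (z : Option (Fin m) → Bool) : TplPair m → TplVertex m
  | .inl j => (.inl j, true)
  | .inr (.inl none) =>
      if z none then (.inr (.inr none), false) else (.inr (.inl none), true)
  | .inr (.inl (some (.inl i))) => (.inr (.inl (some (.inl i))), true)
  | .inr (.inl (some (.inr i))) =>
      if z (some i) then (.inr (.inr (some i)), false) else (.inr (.inl (some (.inr i))), true)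
  | .inr (.inr i) => (.inr (.inr i), true)

lemma tplSet_ite (x : Option (Fin m) → Bool) (c : Bool) (v w : TplVertex m) :
    tplSet x (if c then v else w) = if c then tplSet x v else tplSet x w :=
  apply_ite (tplSet x) _ _ _

lemma crossCount_tpl (x z : Option (Fin m) → Bool) :
    crossCount (tplSet x) (tplMap z) = 3 + if x none && z none then 2 else 0 := by
  unfold crossCount
  simp only [Fintype.sum_prod_type, Fintype.sum_sum_type, Fintype.sum_option, Fintype.sum_bool,
    tplMap, tplSet_ite]
  simp only [tplSet]
  rcases Bool.eq_false_or_eq_true (x none) with hx | hx <;>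
    rcases Bool.eq_false_or_eq_true (z none) with hz | hz <;> simp [hx, hz]

lemma oddCut_tplSet (x : Option (Fin m) → Bool) : OddCut (tplSet x) := by
  unfold OddCut
  simp only [Fintype.sum_prod_type, Fintype.sum_sum_type, Fintype.sum_option, tplSet,
    Fintype.sum_bool, Bool.toNat_false, ← two_mul, ← Finset.mul_sum]
  simp
  exact ⟨1 + ((x none).toNat + ∑ i, (x (some i)).toNat), by ring⟩

lemma pairMerging_tplMap (z : Option (Fin m) → Bool) : PairMerging (TplPair m) (tplMap z) := by
  refine ⟨⟨tplPartner z, ?_⟩, tplFree z, ?_, ?_⟩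
  · rintro ⟨j | (_ | (i | i)) | (_ | i), b⟩ ⟨j' | (_ | (i' | i')) | (_ | i'), b'⟩ h <;>
      cases b <;> cases b' <;> cases hz : z none <;> (try cases hi : z (some i)) <;>
      (try cases hi' : z (some i')) <;> simp_all [tplMap, tplPartner]
  · rintro (j | (_ | (i | i)) | (_ | i)) (j' | (_ | (i' | i')) | (_ | i')) h <;>
      cases hz : z none <;> (try cases hi : z (some i)) <;>
      (try cases hi' : z (some i')) <;> simp_all [tplFree]
  · rintro (j | (_ | (i | i)) | (_ | i)) ⟨j' | (_ | (i' | i')) | (_ | i'), b'⟩ h <;>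
      cases b' <;> cases hz : z none <;> (try cases hi : z (some i)) <;>
      (try cases hi' : z (some i')) <;> simp_all [tplFree, tplMap]

/-- Exchanges the distinguished first-side pair with a pair of the first kind. -/
def firstSwap (i : Option (Fin m)) : Equiv.Perm (TplVertex m) :=
  Equiv.prodCongr (Equiv.sumCongr (Equiv.refl _)
    (Equiv.sumCongr (Equiv.swap none (i.map Sum.inl)) (Equiv.refl _))) (Equiv.refl _)

/-- Exchanges the distinguished pairs of both sides with a matched pair of pairs. -/
def secondSwap (i : Option (Fin m)) : Equiv.Perm (TplVertex m) :=
  Equiv.prodCongr (Equiv.sumCongr (Equiv.refl _)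
    (Equiv.sumCongr (Equiv.swap none (i.map Sum.inr)) (Equiv.swap none i))) (Equiv.refl _)

lemma tplSet_comp_firstSwap (x : Option (Fin m) → Bool) (i : Option (Fin m)) :
    tplSet x ∘ firstSwap i = tplSet (x ∘ Equiv.swap none i) := by
  ext1 v
  rcases i with _ | i
  · rcases v with ⟨j | (_ | (k | k)) | (_ | k), b⟩ <;> simp [firstSwap, tplSet]
  · rcases v with ⟨j | (_ | (k | k)) | (_ | k), b⟩ <;> (try by_cases hk : k = i) <;>
      simp [firstSwap, tplSet, Equiv.swap_apply_def, *]

lemma conjMap_firstSwap (z : Option (Fin m) → Bool) (hz : z none = false) (i : Option (Fin m)) :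
    conjMap (firstSwap i) (tplMap z) = tplMap z := by
  apply conjMap_eq_of_semiconj
  intro v
  rcases i with _ | i
  · rcases v with ⟨j | (_ | (k | k)) | (_ | k), b⟩ <;> simp [firstSwap, tplMap, hz]
  · rcases v with ⟨j | (_ | (k | k)) | (_ | k), b⟩ <;> (try by_cases hk : k = i) <;>
      simp [firstSwap, tplMap, Equiv.swap_apply_def, *] <;> split_ifs <;>
      simp [Equiv.swap_apply_def, *]

lemma tplSet_comp_secondSwap (x : Option (Fin m) → Bool) (hx : x none = false)
    (i : Option (Fin m)) : tplSet x ∘ secondSwap i = tplSet x := by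
  ext1 v
  rcases i with _ | i
  · rcases v with ⟨j | (_ | (k | k)) | (_ | k), b⟩ <;> simp [secondSwap, tplSet]
  · rcases v with ⟨j | (_ | (k | k)) | (_ | k), b⟩ <;> (try by_cases hk : k = i) <;>
      simp [secondSwap, tplSet, Equiv.swap_apply_def, *]

lemma conjMap_secondSwap (z : Option (Fin m) → Bool) (i : Option (Fin m)) :
    conjMap (secondSwap i) (tplMap z) = tplMap (z ∘ Equiv.swap none i) := by
  apply conjMap_eq_of_semiconj
  intro v
  rcases i with _ | i
  · rcases v with ⟨j | (_ | (k | k)) | (_ | k), b⟩ <;> simp [secondSwap, tplMap]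
  · rcases v with ⟨j | (_ | (k | k)) | (_ | k), b⟩ <;> (try by_cases hk : k = i) <;>
      simp [secondSwap, tplMap, Equiv.swap_apply_def, *] <;> split_ifs <;>
      simp [Equiv.swap_apply_def, *]

/-- A permutation of order five of the three core pairs and the two distinguished pairs. -/
def coreRotation (m : ℕ) : Equiv.Perm (TplVertex m) where
  toFun
    | (.inl 0, b) => (.inl 2, b)
    | (.inl 1, false) => (.inr (.inl none), false)
    | (.inl 1, true) => (.inr (.inr none), false)
    | (.inl 2, false) => (.inr (.inl none), true)
    | (.inl 2, true) => (.inr (.inr none), true)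
    | (.inr (.inl none), false) => (.inl 0, false)
    | (.inr (.inl none), true) => (.inl 1, false)
    | (.inr (.inr none), false) => (.inl 0, true)
    | (.inr (.inr none), true) => (.inl 1, true)
    | (.inr (.inl (some i)), b) => (.inr (.inl (some i)), b)
    | (.inr (.inr (some i)), b) => (.inr (.inr (some i)), b)
  invFun
    | (.inl 2, b) => (.inl 0, b)
    | (.inr (.inl none), false) => (.inl 1, false)
    | (.inr (.inr none), false) => (.inl 1, true)
    | (.inr (.inl none), true) => (.inl 2, false)
    | (.inr (.inr none), true) => (.inl 2, true)
    | (.inl 0, false) => (.inr (.inl none), false)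
    | (.inl 1, false) => (.inr (.inl none), true)
    | (.inl 0, true) => (.inr (.inr none), false)
    | (.inl 1, true) => (.inr (.inr none), true)
    | (.inr (.inl (some i)), b) => (.inr (.inl (some i)), b)
    | (.inr (.inr (some i)), b) => (.inr (.inr (some i)), b)
  left_inv := by
    rintro ⟨j | (_ | k) | (_ | k), (_ | _)⟩ <;> try fin_cases j
    all_goals rfl
  right_inv := by
    rintro ⟨j | (_ | k) | (_ | k), (_ | _)⟩ <;> try fin_cases j
    all_goals rfl

lemma coreRotation_pow_five : coreRotation m ^ 5 = 1 := by
  ext1 v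
  simp only [pow_succ, pow_zero, one_mul, Equiv.Perm.mul_apply, Equiv.Perm.one_apply]
  rcases v with ⟨j | (_ | k) | (_ | k), (_ | _)⟩ <;> try fin_cases j
  all_goals rfl

lemma tplSet_comp_coreRotation (x : Option (Fin m) → Bool) (hx : x none = true) :
    tplSet x ∘ coreRotation m = tplSet x := by
  ext1 v
  rcases v with ⟨j | (_ | k) | (_ | k), (_ | _)⟩ <;> try fin_cases j
  all_goals simp [coreRotation, tplSet, hx]

lemma conjMap_coreRotation (z : Option (Fin m) → Bool) (hz : z none = true) :
    conjMap (coreRotation m) (tplMap z) = tplMap z := by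
  apply conjMap_eq_of_semiconj
  rintro ⟨j | (_ | (k | k)) | (_ | k), (_ | _)⟩ <;> try fin_cases j
  all_goals simp [coreRotation, tplMap, hz]
  all_goals split_ifs <;> rfl

lemma crossCount_coreRotation (x z : Option (Fin m) → Bool) (hx : x none = false)
    (hz : z none = false) :
    crossCount (tplSet x) (conjMap (coreRotation m) (tplMap z)) = 1 := by
  have key : ∀ v, tplSet x (conjMap (coreRotation m) (tplMap z) v) = tplSet x v ↔
      v ≠ (.inl 0, true) := by
    rintro ⟨j | (_ | (k | k)) | (_ | k), (_ | _)⟩ <;> try fin_cases j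
    all_goals simp [conjMap, coreRotation, tplMap, hz, tplSet, hx]
    all_goals cases z (some k) <;> simp
  unfold crossCount
  simp only [key, ne_eq, ite_not]
  simp

end Template

section RectangleBound

/-- If `a` and `b` are invariant under an element `ρ` of order five, and `u * v` vanishes
at one of any two consecutive points of a `ρ`-orbit, then `u * v` is on average at most
`2 / 5` of `a * b`, up to the errors of replacing `u` by `a` and `v` by `b`. -/
lemma five_mul_sum_mul_le {G : Type*} [Group G] [Fintype G] (u v a b : G → ℝ) (ρ : G)
    (hρ : ρ ^ 5 = 1) (hu : ∀ p, 0 ≤ u p) (hv : ∀ p, 0 ≤ v p) (ha : ∀ p, 0 ≤ a p)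
    (hb : ∀ p, 0 ≤ b p) (haρ : ∀ p, a (ρ * p) = a p) (hbρ : ∀ p, b (ρ * p) = b p)
    (h0 : ∀ p, u p * v (ρ * p) = 0) :
    5 * ∑ p, u p * v p ≤ 2 * ∑ p, a p * b p +
      5 * (∑ p, |b p - v p| * u p + 2 * ∑ p, |a p - u p| * v p) := by
  have hpt : ∀ p, u p * v p ≤ a p * b p + (|b p - v p| * u p + 2 * (|a p - u p| * v p)) := by
    intro p
    have h1 := hu p
    have h2 := hv p
    have h3 := hb p
    have h4 := ha p
    have hA := abs_nonneg (a p - u p)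
    have hB := abs_nonneg (b p - v p)
    by_cases hbv : b p ≤ 2 * v p
    · have e1 : (v p - b p) * u p ≤ |b p - v p| * u p :=
        mul_le_mul_of_nonneg_right (by rw [abs_sub_comm]; exact le_abs_self _) h1
      have e2 : (u p - a p) * b p ≤ |a p - u p| * b p :=
        mul_le_mul_of_nonneg_right (by rw [abs_sub_comm]; exact le_abs_self _) h3
      have e3 : |a p - u p| * b p ≤ |a p - u p| * (2 * v p) :=
        mul_le_mul_of_nonneg_left hbv hA
      nlinarith
    · have e1 : v p * u p ≤ |b p - v p| * u p :=
        mul_le_mul_of_nonneg_right ((by linarith : v p ≤ b p - v p).trans (le_abs_self _)) h1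
      have e2 : 0 ≤ |a p - u p| * v p := mul_nonneg hA h2
      have e3 : 0 ≤ a p * b p := mul_nonneg h4 h3
      linarith
  set e : G → ℝ := fun p => |b p - v p| * u p + 2 * (|a p - u p| * v p) with he
  have he0 : ∀ p, 0 ≤ e p := fun p => by
    have := hu p
    have := hv p
    positivity
  set w : G → ℝ := fun p => u p * v p with hw
  have hcons : ∀ p, w p = 0 ∨ w (ρ * p) = 0 := by
    intro p
    rcases mul_eq_zero.1 (h0 p) with h | h
    · exact Or.inl (by simp [hw, h])
    · exact Or.inr (by simp [hw, h])
  have hc : ∀ p, a (ρ * p) * b (ρ * p) = a p * b p := fun p => by rw [haρ, hbρ]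
  have horbit : ∀ p, w p + w (ρ * p) + w (ρ * (ρ * p)) + w (ρ * (ρ * (ρ * p))) +
      w (ρ * (ρ * (ρ * (ρ * p)))) ≤ 2 * (a p * b p) + (e p + e (ρ * p) + e (ρ * (ρ * p)) +
        e (ρ * (ρ * (ρ * p))) + e (ρ * (ρ * (ρ * (ρ * p))))) := by
    intro p
    have hclose : ρ * (ρ * (ρ * (ρ * (ρ * p)))) = p := by
      have : ρ * (ρ * (ρ * (ρ * (ρ * p)))) = ρ ^ 5 * p := by simp [pow_succ, mul_assoc]
      rw [this, hρ, one_mul]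
    have c0 := hcons p
    have c1 := hcons (ρ * p)
    have c2 := hcons (ρ * (ρ * p))
    have c3 := hcons (ρ * (ρ * (ρ * p)))
    have c4 := hcons (ρ * (ρ * (ρ * (ρ * p))))
    rw [hclose] at c4
    have w0 := hpt p
    have w1 := hpt (ρ * p)
    have w2 := hpt (ρ * (ρ * p))
    have w3 := hpt (ρ * (ρ * (ρ * p)))
    have w4 := hpt (ρ * (ρ * (ρ * (ρ * p))))
    simp only [hc] at w1 w2 w3 w4
    have n0 := he0 p
    have n1 := he0 (ρ * p)
    have n2 := he0 (ρ * (ρ * p))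
    have n3 := he0 (ρ * (ρ * (ρ * p)))
    have n4 := he0 (ρ * (ρ * (ρ * (ρ * p))))
    have hab : 0 ≤ a p * b p := mul_nonneg (ha p) (hb p)
    change w p ≤ _ + e p at w0
    change w (ρ * p) ≤ _ + e (ρ * p) at w1
    change w (ρ * (ρ * p)) ≤ _ + e (ρ * (ρ * p)) at w2
    change w (ρ * (ρ * (ρ * p))) ≤ _ + e (ρ * (ρ * (ρ * p))) at w3
    change w (ρ * (ρ * (ρ * (ρ * p)))) ≤ _ + e (ρ * (ρ * (ρ * (ρ * p)))) at w4
    rcases c0 with h | h <;> rcases c1 with h' | h' <;> rcases c2 with h'' | h'' <;>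
      rcases c3 with h3 | h3 <;> rcases c4 with h4 | h4 <;> linarith
  have hshift : ∀ f : G → ℝ, ∑ p, f (ρ * p) = ∑ p, f p := fun f =>
    Equiv.sum_comp (Equiv.mulLeft ρ) f
  have hsum := Finset.sum_le_sum fun p (_ : p ∈ (Finset.univ : Finset G)) => horbit p
  simp only [Finset.sum_add_distrib, ← Finset.mul_sum] at hsum
  rw [hshift fun p => w (ρ * (ρ * (ρ * p))), hshift fun p => e (ρ * (ρ * (ρ * p))),
    hshift fun p => w (ρ * (ρ * p)), hshift fun p => e (ρ * (ρ * p)),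
    hshift fun p => w (ρ * p), hshift fun p => e (ρ * p), hshift w, hshift e] at hsum
  have hes : ∑ p, e p = ∑ p, |b p - v p| * u p + 2 * ∑ p, |a p - u p| * v p := by
    simp only [he, Finset.sum_add_distrib, Finset.mul_sum]
  rw [← hes]
  linarith

/-- The sum of `f` over the half of the cube where the distinguished coordinate equals `c`. -/
def sideSum {κ : Type*} [Fintype κ] [DecidableEq κ] (c : Bool) (f : (Option κ → Bool) → ℝ) : ℝ :=
  ∑ x, if x none = c then f x else 0

section SideSum

variable {κ : Type*} [Fintype κ] [DecidableEq κ]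

lemma sideSum_congr {c : Bool} {f g : (Option κ → Bool) → ℝ}
    (h : ∀ x, x none = c → f x = g x) : sideSum c f = sideSum c g := by
  refine Finset.sum_congr rfl fun x _ => ?_
  split_ifs with hx
  · exact h x hx
  · rfl

lemma sideSum_nonneg (c : Bool) {f : (Option κ → Bool) → ℝ} (h : ∀ x, 0 ≤ f x) :
    0 ≤ sideSum c f :=
  Finset.sum_nonneg fun x _ => by
    split_ifs
    · exact h x
    · exact le_rfl

lemma sideSum_le (c : Bool) {f : (Option κ → Bool) → ℝ} {B : ℝ} (hB : 0 ≤ B)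
    (h : ∀ x, f x ≤ B) : sideSum c f ≤ B * 2 ^ Fintype.card (Option κ) := by
  calc sideSum c f ≤ ∑ _x : Option κ → Bool, B := Finset.sum_le_sum fun x _ => by
        split_ifs
        · exact h x
        · exact hB
    _ = B * 2 ^ Fintype.card (Option κ) := by
        rw [Finset.sum_const, Finset.card_univ, Fintype.card_fun, nsmul_eq_mul, mul_comm]
        simp

lemma sideSum_mul (c : Bool) (f : (Option κ → Bool) → ℝ) (y : ℝ) :
    sideSum c f * y = sideSum c fun x => f x * y := by
  simp [sideSum, Finset.sum_mul, ite_mul]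

lemma mul_sideSum (c : Bool) (f : (Option κ → Bool) → ℝ) (y : ℝ) :
    y * sideSum c f = sideSum c fun x => y * f x := by
  simp [sideSum, Finset.mul_sum, mul_ite]

lemma sum_sideSum {T : Type*} (s : Finset T) (c : Bool) (f : T → (Option κ → Bool) → ℝ) :
    ∑ t ∈ s, sideSum c (f t) = sideSum c fun x => ∑ t ∈ s, f t x := by
  unfold sideSum
  rw [Finset.sum_comm]
  refine Finset.sum_congr rfl fun x _ => ?_
  split_ifs <;> simp

lemma sum_eq_sideSum_add (f : (Option κ → Bool) → ℝ) :
    ∑ x, f x = sideSum false f + sideSum true f := by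
  unfold sideSum
  rw [← Finset.sum_add_distrib]
  refine Finset.sum_congr rfl fun x _ => ?_
  cases x none <;> simp

lemma sum_boolSign_mul (f : (Option κ → Bool) → ℝ) :
    ∑ x, boolSign (x none) * f x = sideSum false f - sideSum true f := by
  unfold sideSum
  rw [← Finset.sum_sub_distrib]
  refine Finset.sum_congr rfl fun x _ => ?_
  cases x none <;> simp [boolSign]

lemma sideSum_const (c : Bool) (y : ℝ) :
    sideSum (κ := κ) c (fun _ => y) = 2 ^ Fintype.card κ * y := by
  unfold sideSum
  rw [← Equiv.sum_comp (Equiv.piOptionEquivProd (β := fun _ : Option κ => Bool)).symm]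
  rw [Fintype.sum_prod_type, Fintype.sum_bool]
  cases c <;> simp [Equiv.piOptionEquivProd]

end SideSum

variable {m : ℕ}

/-- The sum of `u` over the template cuts of one side, transported by `p`. -/
def cutSum (u : (TplVertex m → Bool) → ℝ) (c : Bool) (p : Equiv.Perm (TplVertex m)) : ℝ :=
  sideSum c fun x => u (tplSet x ∘ p)

/-- The sum of `v` over the template maps of one side, transported by `p`. -/
def mapSum (v : (TplVertex m → TplVertex m) → ℝ) (c : Bool) (p : Equiv.Perm (TplVertex m)) : ℝ :=
  sideSum c fun z => v (conjMap p (tplMap z))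

lemma cutSum_mul_mapSum (u : (TplVertex m → Bool) → ℝ) (v : (TplVertex m → TplVertex m) → ℝ)
    (c d : Bool) (p : Equiv.Perm (TplVertex m)) :
    cutSum u c p * mapSum v d p =
      sideSum c fun x => sideSum d fun z => u (tplSet x ∘ p) * v (conjMap p (tplMap z)) := by
  unfold cutSum mapSum
  rw [sideSum_mul]
  simp only [mul_sideSum]

lemma cutSum_nonneg {u : (TplVertex m → Bool) → ℝ} (hu : ∀ U, 0 ≤ u U) (c : Bool)
    (p : Equiv.Perm (TplVertex m)) : 0 ≤ cutSum u c p :=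
  sideSum_nonneg c fun _ => hu _

lemma mapSum_nonneg {v : (TplVertex m → TplVertex m) → ℝ} (hv : ∀ φ, 0 ≤ v φ) (c : Bool)
    (p : Equiv.Perm (TplVertex m)) : 0 ≤ mapSum v c p :=
  sideSum_nonneg c fun _ => hv _

lemma mapSum_firstSwap_mul (v : (TplVertex m → TplVertex m) → ℝ) (i : Option (Fin m))
    (p : Equiv.Perm (TplVertex m)) : mapSum v false (firstSwap i * p) = mapSum v false p :=
  sideSum_congr fun z hz => by rw [conjMap_mul, conjMap_firstSwap z hz]

lemma cutSum_secondSwap_mul (u : (TplVertex m → Bool) → ℝ) (i : Option (Fin m))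
    (p : Equiv.Perm (TplVertex m)) : cutSum u false (secondSwap i * p) = cutSum u false p :=
  sideSum_congr fun x hx => by
    rw [Equiv.Perm.coe_mul, ← Function.comp_assoc, tplSet_comp_secondSwap x hx]

lemma cutSum_coreRotation_mul (u : (TplVertex m → Bool) → ℝ)
    (p : Equiv.Perm (TplVertex m)) : cutSum u true (coreRotation m * p) = cutSum u true p :=
  sideSum_congr fun x hx => by
    rw [Equiv.Perm.coe_mul, ← Function.comp_assoc, tplSet_comp_coreRotation x hx]

lemma mapSum_coreRotation_mul (v : (TplVertex m → TplVertex m) → ℝ)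
    (p : Equiv.Perm (TplVertex m)) : mapSum v true (coreRotation m * p) = mapSum v true p :=
  sideSum_congr fun z hz => by rw [conjMap_mul, conjMap_coreRotation z hz]

lemma oddCut_tplSet_comp (x : Option (Fin m) → Bool) (p : Equiv.Perm (TplVertex m)) :
    OddCut (tplSet x ∘ p) :=
  (oddCut_tplSet x).comp_perm p

lemma pairMerging_conjMap_tplMap (z : Option (Fin m) → Bool) (p : Equiv.Perm (TplVertex m)) :
    PairMerging (TplPair m) (conjMap p (tplMap z)) :=
  (pairMerging_tplMap z).conjMap p

lemma cutSum_mul_mapSum_coreRotation (u : (TplVertex m → Bool) → ℝ)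
    (v : (TplVertex m → TplVertex m) → ℝ)
    (h0 : ∀ U φ, OddCut U → PairMerging (TplPair m) φ → crossCount U φ = 1 → u U * v φ = 0)
    (p : Equiv.Perm (TplVertex m)) :
    cutSum u false p * mapSum v false (coreRotation m * p) = 0 := by
  unfold cutSum mapSum
  rw [sideSum_mul, sideSum_congr (g := fun _ => 0), sideSum_const, mul_zero]
  intro x hx
  rw [mul_sideSum, sideSum_congr (g := fun _ => 0), sideSum_const, mul_zero]
  intro z hz
  refine h0 _ _ (oddCut_tplSet_comp x p) (pairMerging_conjMap_tplMap z _) ?_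
  rw [conjMap_mul, crossCount_conjMap, crossCount_coreRotation x z hx hz]

section Influence

variable (u : (TplVertex m → Bool) → ℝ) (v : (TplVertex m → TplVertex m) → ℝ)
  (hu : ∀ U, 0 ≤ u U) (hv : ∀ φ, 0 ≤ v φ) {B t : ℝ} (hB0 : 0 ≤ B) (ht : 0 < t)
  (hB : ∀ U φ, OddCut U → PairMerging (TplPair m) φ → u U * v φ ≤ B)

include hu hv hB0 ht hB

lemma sum_abs_cutSum_sub_mul_mapSum_le :
    ∑ p, |cutSum u true p - cutSum u false p| * mapSum v false p ≤
      t * ∑ p, (cutSum u false p * mapSum v false p + cutSum u true p * mapSum v false p) +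
      Fintype.card (Equiv.Perm (TplVertex m)) * (B * 2 ^ (m + 1) / t *
        Real.exp (-(t ^ 2 * (m + 1) / 2)) * 2 ^ (m + 1) / (m + 1)) := by
  have hcard : Fintype.card (Option (Fin m)) = m + 1 := by simp
  have err := sum_group_abs_influence_le (none : Option (Fin m))
    (fun (p : Equiv.Perm (TplVertex m)) x => u (tplSet x ∘ p) * mapSum v false p) firstSwap
    (fun i p x => by
      change u _ * mapSum v false (firstSwap i * p) = _
      rw [mapSum_firstSwap_mul, Equiv.Perm.coe_mul, ← Function.comp_assoc, tplSet_comp_firstSwap])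
    (B * 2 ^ (m + 1)) t (fun p x => mul_nonneg (hu _) (mapSum_nonneg hv _ _))
    (fun p x => by
      rw [mapSum, mul_sideSum, ← hcard]
      exact sideSum_le _ hB0 fun z =>
        hB _ _ (oddCut_tplSet_comp x p) (pairMerging_conjMap_tplMap z p)) ht
  have hl : ∀ p : Equiv.Perm (TplVertex m), |∑ x : Option (Fin m) → Bool,
      boolSign (x none) * (u (tplSet x ∘ p) * mapSum v false p)| =
      |cutSum u true p - cutSum u false p| * mapSum v false p := fun p => by
    rw [sum_boolSign_mul, ← sideSum_mul, ← sideSum_mul, ← sub_mul, abs_mul,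
      abs_of_nonneg (mapSum_nonneg hv _ _), abs_sub_comm]
    rfl
  have hr : ∀ p : Equiv.Perm (TplVertex m),
      ∑ x : Option (Fin m) → Bool, u (tplSet x ∘ p) * mapSum v false p =
      cutSum u false p * mapSum v false p + cutSum u true p * mapSum v false p := fun p => by
    rw [sum_eq_sideSum_add, ← sideSum_mul, ← sideSum_mul]
    rfl
  simp only [hl, hr, hcard, Nat.cast_add, Nat.cast_one] at err
  exact err

lemma sum_abs_mapSum_sub_mul_cutSum_le :
    ∑ p, |mapSum v true p - mapSum v false p| * cutSum u false p ≤
      t * ∑ p, (cutSum u false p * mapSum v false p + cutSum u false p * mapSum v true p) +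
      Fintype.card (Equiv.Perm (TplVertex m)) * (B * 2 ^ (m + 1) / t *
        Real.exp (-(t ^ 2 * (m + 1) / 2)) * 2 ^ (m + 1) / (m + 1)) := by
  have hcard : Fintype.card (Option (Fin m)) = m + 1 := by simp
  have err := sum_group_abs_influence_le (none : Option (Fin m))
    (fun (p : Equiv.Perm (TplVertex m)) z => cutSum u false p * v (conjMap p (tplMap z)))
    secondSwap
    (fun i p z => by
      change cutSum u false (secondSwap i * p) * _ = _
      rw [cutSum_secondSwap_mul, conjMap_mul, conjMap_secondSwap])
    (B * 2 ^ (m + 1)) t (fun p x => mul_nonneg (cutSum_nonneg hu _ _) (hv _))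
    (fun p z => by
      rw [cutSum, sideSum_mul, ← hcard]
      exact sideSum_le _ hB0 fun x =>
        hB _ _ (oddCut_tplSet_comp x p) (pairMerging_conjMap_tplMap z p)) ht
  have hl : ∀ p : Equiv.Perm (TplVertex m), |∑ z : Option (Fin m) → Bool,
      boolSign (z none) * (cutSum u false p * v (conjMap p (tplMap z)))| =
      |mapSum v true p - mapSum v false p| * cutSum u false p := fun p => by
    rw [sum_boolSign_mul, ← mul_sideSum, ← mul_sideSum, ← mul_sub, abs_mul,
      abs_of_nonneg (cutSum_nonneg hu _ _), abs_sub_comm, mul_comm]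
    rfl
  have hr : ∀ p : Equiv.Perm (TplVertex m),
      ∑ z : Option (Fin m) → Bool, cutSum u false p * v (conjMap p (tplMap z)) =
      cutSum u false p * mapSum v false p + cutSum u false p * mapSum v true p := fun p => by
    rw [sum_eq_sideSum_add, ← mul_sideSum, ← mul_sideSum]
    rfl
  simp only [hl, hr, hcard, Nat.cast_add, Nat.cast_one] at err
  exact err

/-- A nonnegative rank-one matrix on cuts and maps that vanishes on the entries with crossing
number one has small weight on the entries with crossing number three, compared to those with
crossing number five. -/
lemma five_mul_sum_cutSum_mul_mapSum_le
    (h0 : ∀ U φ, OddCut U → PairMerging (TplPair m) φ → crossCount U φ = 1 → u U * v φ = 0) :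
    5 * ∑ p, cutSum u false p * mapSum v false p ≤
      2 * ∑ p, cutSum u true p * mapSum v true p +
      5 * (3 * t * ∑ p, cutSum u false p * mapSum v false p +
        t * ∑ p, cutSum u false p * mapSum v true p +
        2 * t * ∑ p, cutSum u true p * mapSum v false p +
        3 * (Fintype.card (Equiv.Perm (TplVertex m)) * (B * 2 ^ (m + 1) / t *
          Real.exp (-(t ^ 2 * (m + 1) / 2)) * 2 ^ (m + 1) / (m + 1)))) := by
  have key := five_mul_sum_mul_le (cutSum u false) (mapSum v false) (cutSum u true)
    (mapSum v true) (coreRotation m) coreRotation_pow_five (cutSum_nonneg hu _)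
    (mapSum_nonneg hv _) (cutSum_nonneg hu _) (mapSum_nonneg hv _) (cutSum_coreRotation_mul u)
    (mapSum_coreRotation_mul v) (cutSum_mul_mapSum_coreRotation u v h0)
  have err1 := sum_abs_cutSum_sub_mul_mapSum_le u v hu hv hB0 ht hB
  have err2 := sum_abs_mapSum_sub_mul_cutSum_le u v hu hv hB0 ht hB
  rw [Finset.sum_add_distrib] at err1 err2
  linarith

end Influence

lemma sum_cutSum_mul_mapSum {r : ℕ} (u : Fin r → (TplVertex m → Bool) → ℝ)
    (v : Fin r → (TplVertex m → TplVertex m) → ℝ)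
    (h : ∀ U φ, OddCut U → PairMerging (TplPair m) φ → ∑ i, u i U * v i φ = crossCount U φ - 1)
    (c d : Bool) (p : Equiv.Perm (TplVertex m)) :
    ∑ i, cutSum (u i) c p * mapSum (v i) d p =
      2 ^ m * (2 ^ m * if c && d then 4 else 2) := by
  simp only [cutSum_mul_mapSum, sum_sideSum]
  rw [sideSum_congr (g := fun _ => 2 ^ m * if c && d then 4 else 2), sideSum_const,
    Fintype.card_fin]
  intro x hx
  rw [sideSum_congr (g := fun _ => if c && d then 4 else 2), sideSum_const, Fintype.card_fin]
  intro z hz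
  rw [h _ _ (oddCut_tplSet_comp x p) (pairMerging_conjMap_tplMap z p), crossCount_conjMap,
    crossCount_tpl, hx, hz]
  cases c <;> cases d <;> norm_num

/-- The nonnegative rank of the matrix of crossing numbers minus one, restricted to odd cuts and
pair-merging maps, is exponential in `m`. -/
theorem exp_le_of_crossCount_factorization {r : ℕ} (u : Fin r → (TplVertex m → Bool) → ℝ)
    (v : Fin r → (TplVertex m → TplVertex m) → ℝ) (hu : ∀ i U, 0 ≤ u i U)
    (hv : ∀ i φ, 0 ≤ v i φ)
    (h : ∀ U φ, OddCut U → PairMerging (TplPair m) φ → ∑ i, u i U * v i φ = crossCount U φ - 1) :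
    Real.exp ((m + 1) / 7200) ≤ 36000 * r := by
  have hle : ∀ i U φ, OddCut U → PairMerging (TplPair m) φ → u i U * v i φ ≤ crossCount U φ - 1 :=
    fun i U φ hU hφ => (Finset.single_le_sum (f := fun i => u i U * v i φ)
      (fun i _ => mul_nonneg (hu i U) (hv i φ)) (Finset.mem_univ i)).trans_eq (h U φ hU hφ)
  have hcard : Fintype.card (TplVertex m) = 6 * m + 10 := by
    simp only [Fintype.card_prod, Fintype.card_sum, Fintype.card_option, Fintype.card_fin,
      Fintype.card_bool]
    ring
  have hB : ∀ i U φ, OddCut U → PairMerging (TplPair m) φ →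
      u i U * v i φ ≤ 10 * ((m : ℝ) + 1) := fun i U φ hU hφ => by
    have h1 : (crossCount U φ : ℝ) ≤ ((6 * m + 10 : ℕ) : ℝ) := by
      rw [← hcard]
      exact_mod_cast crossCount_le_card U φ
    push_cast at h1
    have h2 := hle i U φ hU hφ
    have h3 : (0 : ℝ) ≤ m := Nat.cast_nonneg m
    linarith
  have h0 : ∀ i U φ, OddCut U → PairMerging (TplPair m) φ → crossCount U φ = 1 →
      u i U * v i φ = 0 := fun i U φ hU hφ hc => by
    refine le_antisymm ?_ (mul_nonneg (hu i U) (hv i φ))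
    have := hle i U φ hU hφ
    simpa [hc] using this
  have hM : (0 : ℝ) < m + 1 := by positivity
  have key := Finset.sum_le_sum fun i (_ : i ∈ (Finset.univ : Finset (Fin r))) =>
    five_mul_sum_cutSum_mul_mapSum_le (u i) (v i) (hu i) (hv i) (B := 10 * ((m : ℝ) + 1))
      (t := 1 / 60) (by positivity) (by norm_num) (hB i) (h0 i)
  simp only [Finset.sum_add_distrib, ← Finset.mul_sum] at key
  have hS : ∀ c d, ∑ i, ∑ p, cutSum (u i) c p * mapSum (v i) d p =
      Fintype.card (Equiv.Perm (TplVertex m)) * (2 ^ m * (2 ^ m * if c && d then 4 else 2)) := by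
    intro c d
    rw [Finset.sum_comm, Finset.sum_congr rfl fun p _ => sum_cutSum_mul_mapSum u v h c d p,
      Finset.sum_const, Finset.card_univ, nsmul_eq_mul]
  rw [hS, hS, hS, hS, Finset.sum_const, Finset.card_univ, Fintype.card_fin, nsmul_eq_mul] at key
  have hN : (0 : ℝ) < Fintype.card (Equiv.Perm (TplVertex m)) := by
    exact_mod_cast Fintype.card_pos
  generalize (Fintype.card (Equiv.Perm (TplVertex m)) : ℝ) = N at key hN
  have hexp : Real.exp (-((1 / 60 : ℝ) ^ 2 * (m + 1) / 2)) =
      (Real.exp ((m + 1) / 7200))⁻¹ := by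
    rw [← Real.exp_neg]
    congr 1
    ring
  have hE := Real.exp_pos ((m + 1 : ℝ) / 7200)
  rw [hexp] at key
  generalize Real.exp ((m + 1 : ℝ) / 7200) = E at key hE ⊢
  have hK : (0 : ℝ) < 2 ^ m := by positivity
  simp only [pow_succ] at key
  generalize (2 : ℝ) ^ m = K at key hK
  simp only [Bool.and_false, Bool.and_true, Bool.false_eq_true, if_false, if_true] at key
  have e1 : 10 * ((m : ℝ) + 1) * (K * 2) / (1 / 60) * E⁻¹ * (K * 2) / (m + 1) =
      2400 * K ^ 2 * E⁻¹ := by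
    field_simp
    ring
  rw [e1] at key
  have e2 : N * K ^ 2 * 1 ≤ N * K ^ 2 * (36000 * r * E⁻¹) := by
    nlinarith
  have e3 : 1 ≤ 36000 * r * E⁻¹ := le_of_mul_le_mul_left e2 (by positivity)
  rwa [← div_eq_mul_inv, one_le_div hE] at e3

end RectangleBound

section Farkas

/-- Farkas' lemma for finitely many linear functionals. -/
lemma exists_nonneg_combination_fin {W : Type*} [AddCommGroup W] [Module ℝ W] :
    ∀ {k : ℕ} (a : Fin k → W →ₗ[ℝ] ℝ) (f : W →ₗ[ℝ] ℝ),
      (∀ y, (∀ i, 0 ≤ a i y) → 0 ≤ f y) →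
      ∃ c : Fin k → ℝ, (∀ i, 0 ≤ c i) ∧ ∀ y, f y = ∑ i, c i * a i y := by
  intro k
  induction k with
  | zero =>
    intro a f h
    refine ⟨fun _ => 0, fun _ => le_rfl, fun y => ?_⟩
    have h1 := h y fun i => i.elim0
    have h2 := h (-y) fun i => i.elim0
    rw [map_neg] at h2
    simp only [Finset.univ_eq_empty, Finset.sum_empty]
    linarith
  | succ k ih =>
    intro a f h
    by_cases hA : ∀ y, (∀ i : Fin k, 0 ≤ a i.castSucc y) → 0 ≤ f y
    · obtain ⟨c, hc, hf⟩ := ih (fun i => a i.castSucc) f hA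
      refine ⟨Fin.snoc c 0, fun i => ?_, fun y => ?_⟩
      · refine Fin.lastCases ?_ (fun i => ?_) i
        · simp
        · simpa using hc i
      · simp [Fin.sum_univ_castSucc, hf]
    · push Not at hA
      obtain ⟨y₀, hy₀, hfy₀⟩ := hA
      have hlast : a (Fin.last k) y₀ < 0 := by
        by_contra hcon
        refine hfy₀.not_ge (h y₀ fun i => ?_)
        refine Fin.lastCases ?_ (fun i => ?_) i
        · exact not_lt.1 hcon
        · exact hy₀ i
      set y₁ : W := (-(a (Fin.last k) y₀))⁻¹ • y₀ with hy₁
      have hpos : 0 < (-(a (Fin.last k) y₀))⁻¹ := inv_pos.2 (by linarith)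
      have h1 : a (Fin.last k) y₁ = -1 := by
        rw [hy₁, map_smul, smul_eq_mul, inv_neg, neg_mul, inv_mul_cancel₀ hlast.ne]
      have h2 : ∀ i : Fin k, 0 ≤ a i.castSucc y₁ := fun i => by
        rw [hy₁, map_smul, smul_eq_mul]
        exact mul_nonneg hpos.le (hy₀ i)
      have h3 : f y₁ < 0 := by
        rw [hy₁, map_smul, smul_eq_mul]
        exact mul_neg_of_pos_of_neg hpos hfy₀
      obtain ⟨c, hc, hf⟩ := ih
        (fun i => a i.castSucc + a i.castSucc y₁ • a (Fin.last k))
        (f + f y₁ • a (Fin.last k)) fun y hy => by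
          have := h (y + a (Fin.last k) y • y₁) fun i => by
            refine Fin.lastCases ?_ (fun i => ?_) i
            · simp [h1]
            · have := hy i
              simp only [LinearMap.add_apply, LinearMap.smul_apply, smul_eq_mul] at this
              simp only [map_add, map_smul, smul_eq_mul]
              linarith
          simp only [map_add, map_smul, smul_eq_mul] at this
          simp only [LinearMap.add_apply, LinearMap.smul_apply, smul_eq_mul]
          linarith
      refine ⟨Fin.snoc c (∑ i, c i * a i.castSucc y₁ - f y₁), fun i => ?_, fun y => ?_⟩
      · refine Fin.lastCases ?_ (fun i => ?_) i
        · have : 0 ≤ ∑ i, c i * a i.castSucc y₁ :=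
            Finset.sum_nonneg fun i _ => mul_nonneg (hc i) (h2 i)
          simp only [Fin.snoc_last]
          linarith
        · simpa using hc i
      · have := hf y
        simp only [LinearMap.add_apply, LinearMap.smul_apply, smul_eq_mul, mul_add,
          Finset.sum_add_distrib, ← mul_assoc, ← Finset.sum_mul] at this
        simp only [Fin.sum_univ_castSucc, Fin.snoc_castSucc, Fin.snoc_last]
        linarith

lemma exists_nonneg_combination {W ι : Type*} [AddCommGroup W] [Module ℝ W] [Fintype ι]
    (a : ι → W →ₗ[ℝ] ℝ) (f : W →ₗ[ℝ] ℝ) (h : ∀ y, (∀ i, 0 ≤ a i y) → 0 ≤ f y) :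
    ∃ c : ι → ℝ, (∀ i, 0 ≤ c i) ∧ ∀ y, f y = ∑ i, c i * a i y := by
  obtain ⟨c, hc, hf⟩ := exists_nonneg_combination_fin (fun i => a ((Fintype.equivFin ι).symm i)) f
    fun y hy => h y fun i => by simpa using hy (Fintype.equivFin ι i)
  refine ⟨fun i => c (Fintype.equivFin ι i), fun i => hc _, fun y => ?_⟩
  rw [hf, ← Equiv.sum_comp (Fintype.equivFin ι)]
  simp

/-- The affine form of Farkas' lemma: an affine function that is nonnegative on a nonempty
polyhedron is a nonnegative combination of the constraints and a constant. -/
lemma exists_nonneg_affine_combination {E ι : Type*} [AddCommGroup E] [Module ℝ E] [Fintype ι]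
    (g : ι → E →ᵃ[ℝ] ℝ) (f : E →ᵃ[ℝ] ℝ) {y₀ : E} (hy₀ : ∀ i, 0 ≤ g i y₀)
    (h : ∀ y, (∀ i, 0 ≤ g i y) → 0 ≤ f y) :
    ∃ (c₀ : ℝ) (c : ι → ℝ), 0 ≤ c₀ ∧ (∀ i, 0 ≤ c i) ∧ ∀ y, f y = c₀ + ∑ i, c i * g i y := by
  have hdec : ∀ (q : E →ᵃ[ℝ] ℝ) y, q y = q.linear y + q 0 := fun q y =>
    congrFun (AffineMap.decomp q) y
  let hom : (E →ᵃ[ℝ] ℝ) → (E × ℝ →ₗ[ℝ] ℝ) := fun q =>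
    q.linear.comp (LinearMap.fst ℝ E ℝ) + q 0 • LinearMap.snd ℝ E ℝ
  have hhom : ∀ q y t, hom q (y, t) = q.linear y + q 0 * t := fun q y t => by simp [hom]
  have hscale : ∀ q y (t : ℝ), t ≠ 0 → hom q (y, t) = t * q (t⁻¹ • y) := fun q y t ht => by
    rw [hhom, hdec q (t⁻¹ • y), map_smul, smul_eq_mul]
    field_simp
  obtain ⟨c, hc, hf⟩ := exists_nonneg_combination
    (fun i : Option ι => i.elim (LinearMap.snd ℝ E ℝ) fun i => hom (g i)) (hom f) (by
      rintro ⟨y, t⟩ hy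
      have ht : 0 ≤ t := hy none
      have hg : ∀ i, 0 ≤ hom (g i) (y, t) := fun i => hy (some i)
      rcases ht.eq_or_lt with rfl | ht
      · by_contra hneg
        simp only [hhom, mul_zero, add_zero] at hneg hg
        have hneg' : f.linear y < 0 := not_le.1 hneg
        have hs : 0 ≤ (f y₀ + 1) / -f.linear y :=
          div_nonneg (by linarith [h y₀ hy₀]) (by linarith)
        have hadd : ∀ (q : E →ᵃ[ℝ] ℝ) (s : ℝ), q (y₀ + s • y) = q y₀ + s * q.linear y :=
          fun q s => by
            rw [hdec q, hdec q y₀, map_add, map_smul, smul_eq_mul]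
            ring
        have := h (y₀ + ((f y₀ + 1) / -f.linear y) • y) fun i => by
          rw [hadd]
          exact add_nonneg (hy₀ i) (mul_nonneg hs (hg i))
        rw [hadd, div_mul_eq_mul_div, div_neg, mul_div_assoc, div_self hneg'.ne] at this
        linarith
      · rw [hscale _ _ _ ht.ne']
        refine mul_nonneg ht.le (h _ fun i => ?_)
        have := hg i
        rw [hscale _ _ _ ht.ne'] at this
        exact (mul_nonneg_iff_of_pos_left ht).1 this)
  refine ⟨c none, fun i => c (some i), hc _, fun i => hc _, fun y => ?_⟩
  have := hf (y, 1)
  simp only [Fintype.sum_option, Option.elim, hhom, mul_one, ← hdec] at this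
  simpa using this

end Farkas

section ExtendedFormulation

/-- One direction of Yannakakis' theorem: an extended formulation of size `k` yields a
nonnegative factorization of size `k + 1` of every slack matrix. -/
theorem IsEF.exists_slack_factorization {ι : Type} [Fintype ι] {P : Set (ι → ℝ)} {k : ℕ}
    (h : IsEF P k) {T : Type*} (x : T → ι → ℝ) (hx : ∀ t, x t ∈ P) :
    ∃ v : Fin (k + 1) → T → ℝ, (∀ i t, 0 ≤ v i t) ∧ ∀ f : (ι → ℝ) →ᵃ[ℝ] ℝ,
      (∀ z ∈ P, 0 ≤ f z) →
        ∃ u : Fin (k + 1) → ℝ, (∀ i, 0 ≤ u i) ∧ ∀ t, f (x t) = ∑ i, u i * v i t := by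
  obtain ⟨e, l, A, b, C, d, π, rfl⟩ := h
  choose y hy hyx using hx
  refine ⟨fun i t => Fin.lastCases (motive := fun _ => ℝ) 1 (fun r => b r - A.mulVec (y t) r) i,
    fun i t => ?_, fun f hf => ?_⟩
  · refine Fin.lastCases ?_ (fun r => ?_) i
    · simp
    · simpa using (hy t).1 r
  · rcases isEmpty_or_nonempty T with hT | ⟨⟨t₀⟩⟩
    · exact ⟨fun _ => 0, fun _ => le_rfl, fun t => hT.elim t⟩
    let slack : Fin k → (Fin e → ℝ) →ᵃ[ℝ] ℝ := fun r =>
      AffineMap.const ℝ _ (b r) - ((LinearMap.proj r).comp A.mulVecLin).toAffineMap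
    let eqn : Fin l → (Fin e → ℝ) →ᵃ[ℝ] ℝ := fun s =>
      AffineMap.const ℝ _ (d s) - ((LinearMap.proj s).comp C.mulVecLin).toAffineMap
    have hslack : ∀ r y, slack r y = b r - A.mulVec y r := fun r y => by simp [slack]
    have heqn : ∀ s y, eqn s y = d s - C.mulVec y s := fun s y => by simp [eqn]
    obtain ⟨c₀, c, hc₀, hc, hfc⟩ := exists_nonneg_affine_combination
      (fun i : Fin k ⊕ Fin l ⊕ Fin l => Sum.elim slack (Sum.elim eqn fun s => -eqn s) i)
      (f.comp π) (y₀ := y t₀) (by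
        rintro (r | s | s)
        · simpa [hslack] using (hy t₀).1 r
        · simp [heqn, (hy t₀).2 s]
        · simp [heqn, (hy t₀).2 s])
      (fun w hw => hf _ ⟨w, ⟨fun r => by simpa [hslack] using hw (.inl r), fun s => by
        have h1 := hw (.inr (.inl s))
        have h2 := hw (.inr (.inr s))
        simp only [Sum.elim_inr, Sum.elim_inl, AffineMap.coe_neg, Pi.neg_apply, heqn] at h1 h2
        linarith⟩, rfl⟩)
    refine ⟨fun i => Fin.lastCases (motive := fun _ => ℝ) c₀ (fun r => c (.inl r)) i,
      fun i => ?_, fun t => ?_⟩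
    · refine Fin.lastCases ?_ (fun r => ?_) i
      · simpa using hc₀
      · simpa using hc _
    · have := hfc (y t)
      rw [AffineMap.comp_apply, hyx] at this
      rw [this, Fin.sum_univ_castSucc]
      simp [hslack, heqn, (hy t).2, add_comm]

lemma isEF_convexHull_range {ι : Type} [Fintype ι] {e : ℕ} (x : Fin e → ι → ℝ) :
    IsEF (convexHull ℝ (Set.range x)) e := by
  refine ⟨e, 1, -1, 0, fun _ _ => 1, fun _ => 1,
    (Fintype.linearCombination ℝ x).toAffineMap, ?_⟩
  have hset : {y : Fin e → ℝ | (∀ r, (-1 : Matrix (Fin e) (Fin e) ℝ).mulVec y r ≤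
      (0 : Fin e → ℝ) r) ∧ ∀ r : Fin 1, Matrix.mulVec (fun _ _ => 1) y r = (1 : ℝ)} =
      stdSimplex ℝ (Fin e) := by
    ext y
    simp [stdSimplex, Matrix.mulVec, dotProduct, Matrix.one_apply]
  rw [hset, ← convexHull_rangle_single_eq_stdSimplex]
  rw [LinearMap.coe_toAffineMap, LinearMap.image_convexHull, ← Set.range_comp]
  congr 2
  ext1 i
  simp [Fintype.linearCombination_apply_single]

lemma isEF_xc_convexHull {ι : Type} [Fintype ι] {s : Set (ι → ℝ)} (hs : s.Finite) :
    IsEF (convexHull ℝ s) (xc (convexHull ℝ s)) := by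
  obtain ⟨n, x, -, rfl⟩ := hs.fin_param
  exact Nat.sInf_mem (s := {k | IsEF _ k}) ⟨n, isEF_convexHull_range x⟩

end ExtendedFormulation

section PairMergingCount

variable {V P : Type} [Fintype V] [DecidableEq V] [Fintype P]

lemma one_le_crossCount_of_card_fiber_le (hcard : Fintype.card V = 2 * Fintype.card P)
    {φ : V → V} {f : P → V}
    (h : ∀ w, (∑ v, if φ v = w then 1 else 0) + 2 * (∑ q, if f q = w then 1 else 0) ≤ 2)
    {U : V → Bool} (hU : OddCut U) : 1 ≤ crossCount U φ := by
  have htot : ∑ w, ((∑ v, if φ v = w then 1 else 0) + 2 * (∑ q, if f q = w then 1 else 0)) =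
      ∑ _w : V, 2 := by
    rw [Finset.sum_add_distrib, ← Finset.mul_sum, Finset.sum_comm]
    conv_lhs => arg 2; rw [Finset.sum_comm]
    simp
    omega
  have heq := (Finset.sum_eq_sum_iff_of_le fun w _ => h w).1 htot
  by_contra hlt
  have hzero : ∑ v, (if U (φ v) = U v then 0 else 1) = 0 := by
    unfold crossCount at hlt
    omega
  have hpres : ∀ v, U (φ v) = U v := fun v => by
    have := (Finset.sum_eq_zero_iff.1 hzero) v (Finset.mem_univ v)
    by_contra hne
    simp [hne] at this
  have heven : Even (∑ v, (U v).toNat) := by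
    have : ∑ v, (U v).toNat = ∑ w, (U w).toNat * ∑ v, if φ v = w then 1 else 0 := by
      simp_rw [Finset.mul_sum]
      rw [Finset.sum_comm]
      refine Finset.sum_congr rfl fun v _ => ?_
      simp [hpres]
    rw [this]
    refine Finset.even_sum _ fun w _ => Even.mul_left ?_ _
    have := heq w (Finset.mem_univ w)
    exact ⟨1 - ∑ q, (if f q = w then 1 else 0), by omega⟩
  exact Nat.not_even_iff_odd.2 hU heven

lemma card_fiber_le_two {φ g : V → V} (hg : ∀ v w, φ v = φ w → w = v ∨ w = g v)
    {f : P → V} (hf : Function.Injective f) (hfφ : ∀ q v, f q ≠ φ v) (w : V) :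
    (∑ v, if φ v = w then 1 else 0) + 2 * (∑ q, if f q = w then 1 else 0) ≤ 2 := by
  classical
  by_cases hw : ∃ v, φ v = w
  · obtain ⟨v₀, rfl⟩ := hw
    have h1 : (∑ v, if φ v = φ v₀ then 1 else 0) ≤ 2 := by
      rw [← Finset.card_filter]
      refine (Finset.card_le_card (t := {v₀, g v₀}) fun v hv => ?_).trans Finset.card_le_two
      rcases hg v₀ v (Finset.mem_filter.1 hv).2.symm with h | h <;> simp [h]
    simpa [hfφ] using h1
  · have h1 : ∀ v, φ v ≠ w := fun v hv => hw ⟨v, hv⟩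
    have h2 : (∑ q, if f q = w then 1 else 0) ≤ 1 := by
      rw [← Finset.card_filter, Finset.card_le_one]
      intro q hq q' hq'
      exact hf ((Finset.mem_filter.1 hq).2.trans (Finset.mem_filter.1 hq').2.symm)
    simp only [h1, if_false, Finset.sum_const_zero]
    omega

end PairMergingCount

section Scheduling

/-- The jobs, and at the same time the machines, of the hard instance: a unit job for each vertex
in `V`, a filler job for each pair in `P`, and `a` dummy jobs for each vertex in `V`. -/
abbrev HardJob (V P : Type) (a : ℕ) : Type := V ⊕ P ⊕ V × Fin a

variable {V P : Type} {a : ℕ}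

/-- The processing times of the hard instance. -/
def hardSize : HardJob V P a → ℕ
  | .inl _ => 1
  | .inr _ => 2

/-- The penalty for assigning a job to a machine, relative to the cut `U`. -/
def hardCost [DecidableEq V] (U : V → Bool) : HardJob V P a → HardJob V P a → ℕ
  | .inl v, .inl w => if U w = U v then 0 else 1
  | .inl _, .inr _ => 1
  | .inr (.inl _), .inl _ => 0
  | .inr (.inl _), .inr _ => 1
  | .inr (.inr (v, _)), .inl w => if w = v then 0 else 1
  | .inr (.inr _), .inr _ => 1

/-- The schedule that processes the unit jobs according to `φ`, the filler jobs according to `f`,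
and the dummy jobs on their own machines. -/
def hardSchedule (φ : V → V) (f : P → V) : HardJob V P a → HardJob V P a
  | .inl v => .inl (φ v)
  | .inr (.inl q) => .inl (f q)
  | .inr (.inr (v, _)) => .inl v

variable [Fintype V] [DecidableEq V] [Fintype P]

lemma sum_hardCost_hardSchedule (U : V → Bool) (φ : V → V) (f : P → V) :
    ∑ j : HardJob V P a, hardCost U j (hardSchedule φ f j) = crossCount U φ := by
  simp [Fintype.sum_sum_type, hardCost, hardSchedule, crossCount]

variable [DecidableEq P]

lemma sum_hardSize_hardSchedule (φ : V → V) (f : P → V) (w : V) :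
    (∑ j : HardJob V P a, if hardSchedule φ f j = .inl w then hardSize j else 0) =
      (∑ v, if φ v = w then 1 else 0) + 2 * (∑ q, if f q = w then 1 else 0) + 2 * a := by
  have hdummy : ∑ v : V, ∑ _k : Fin a, (if v = w then 2 else 0) = 2 * a := by
    rw [Finset.sum_comm]
    simp [mul_comm]
  simp only [Fintype.sum_sum_type, Fintype.sum_prod_type, hardSchedule, hardSize, Sum.inl.injEq,
    Finset.mul_sum, mul_ite, mul_one, mul_zero, hdummy]
  ring

lemma hardSchedule_load_le {φ g : V → V} (hg : ∀ v w, φ v = φ w → w = v ∨ w = g v)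
    {f : P → V} (hf : Function.Injective f) (hfφ : ∀ q v, f q ≠ φ v) (i : HardJob V P a) :
    (∑ j : HardJob V P a, if hardSchedule φ f j = i then hardSize j else 0) ≤ 2 * (a + 1) := by
  rcases i with w | i
  · rw [sum_hardSize_hardSchedule]
    have := card_fiber_le_two hg hf hfφ w
    omega
  · simp [Fintype.sum_sum_type, hardSchedule]

lemma one_le_sum_hardCost (hcard : Fintype.card V = 2 * Fintype.card P)
    {s : HardJob V P a → HardJob V P a}
    (hs : ∀ i, (∑ j, if s j = i then hardSize j else 0) ≤ 2 * (a + 1))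
    {U : V → Bool} (hU : OddCut U) : 1 ≤ ∑ j, hardCost U j (s j) := by
  by_cases hplace : ∃ (φ : V → V) (f : P → V), s = hardSchedule φ f
  · obtain ⟨φ, f, rfl⟩ := hplace
    rw [sum_hardCost_hardSchedule]
    refine one_le_crossCount_of_card_fiber_le hcard (f := f) (fun w => ?_) hU
    have := hs (.inl w)
    rw [sum_hardSize_hardSchedule] at this
    omega
  · by_contra hlt
    have hzero : ∀ j, hardCost U j (s j) = 0 := fun j =>
      Finset.sum_eq_zero_iff.1 (by omega : ∑ j, hardCost U j (s j) = 0) j (Finset.mem_univ j)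
    have hunit : ∀ v, ∃ w, s (.inl v) = .inl w := fun v => by
      have := hzero (.inl v)
      rcases hv : s (.inl v) with w | w
      · exact ⟨w, rfl⟩
      · simp [hv, hardCost] at this
    have hfill : ∀ q, ∃ w, s (.inr (.inl q)) = .inl w := fun q => by
      have := hzero (.inr (.inl q))
      rcases hq : s (.inr (.inl q)) with w | w
      · exact ⟨w, rfl⟩
      · simp [hq, hardCost] at this
    have hdummy : ∀ v k, s (.inr (.inr (v, k))) = .inl v := fun v k => by
      have := hzero (.inr (.inr (v, k)))
      rcases hq : s (.inr (.inr (v, k))) with w | w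
      · simpa [hq, hardCost] using this
      · simp [hq, hardCost] at this
    choose φ hφ using hunit
    choose f hf using hfill
    refine hplace ⟨φ, f, ?_⟩
    ext1 j
    rcases j with v | q | ⟨v, k⟩
    · exact hφ v
    · exact hf q
    · exact hdummy v k

variable (V P a)

/-- An enumeration of the jobs of the hard instance. -/
def hardEquiv : HardJob V P a ≃ Fin (Fintype.card (HardJob V P a)) := Fintype.equivFin _

/-- The processing times of the hard instance, indexed by `Fin`. -/
def hardTime (j : Fin (Fintype.card (HardJob V P a))) : ℕ := hardSize ((hardEquiv V P a).symm j)

variable {V P a}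

omit [DecidableEq V] [DecidableEq P] in
lemma hardTime_eq_one_or_two (j : Fin (Fintype.card (HardJob V P a))) :
    hardTime V P a j = 1 ∨ hardTime V P a j = 2 := by
  unfold hardTime
  rcases (hardEquiv V P a).symm j with v | q
  · exact Or.inl rfl
  · exact Or.inr rfl

lemma load_hardTime (σ : Fin (Fintype.card (HardJob V P a)) → Fin (Fintype.card (HardJob V P a)))
    (i : HardJob V P a) :
    load (hardTime V P a) σ (hardEquiv V P a i) = ∑ j : HardJob V P a,
      if (hardEquiv V P a).symm (σ (hardEquiv V P a j)) = i then hardSize j else 0 := by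
  unfold load hardTime
  rw [← Equiv.sum_comp (hardEquiv V P a)]
  simp [Equiv.symm_apply_eq]

omit [DecidableEq V] [DecidableEq P] in
lemma optMakespan_hardTime [Nonempty P] :
    optMakespan (Fintype.card (HardJob V P a)) (Fintype.card (HardJob V P a)) (hardTime V P a) =
      2 := by
  unfold optMakespan
  apply le_antisymm
  · refine (Nat.sInf_le (Set.mem_range_self (f := makespan (hardTime V P a)) id)).trans
      (Finset.sup_le fun i _ => ?_)
    have : load (hardTime V P a) id i = hardTime V P a i := by simp [load]
    rw [this]
    rcases hardTime_eq_one_or_two i with h | h <;> omega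
  · obtain ⟨σ, hσ⟩ := Nat.sInf_mem (s := {t | ∃ σ : Fin (Fintype.card (HardJob V P a)) →
      Fin (Fintype.card (HardJob V P a)), makespan (hardTime V P a) σ = t}) ⟨_, id, rfl⟩
    rw [← hσ]
    obtain ⟨q⟩ := ‹Nonempty P›
    have hq : hardTime V P a (hardEquiv V P a (.inr (.inl q))) = 2 := by simp [hardTime, hardSize]
    refine le_trans ?_ (Finset.le_sup (f := load (hardTime V P a) σ)
      (Finset.mem_univ (σ (hardEquiv V P a (.inr (.inl q))))))
    refine le_trans (le_of_eq ?_) (Finset.single_le_sum (fun _ _ => Nat.zero_le _)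
      (Finset.mem_univ (hardEquiv V P a (.inr (.inl q)))))
    simp [hq]

variable (V P a) in
/-- The convex hull of the assignment vectors of the `(a + 1)`-approximate schedules of the hard
instance. -/
def hardPolytope : Set (Fin (Fintype.card (HardJob V P a)) × Fin (Fintype.card (HardJob V P a)) →
    ℝ) :=
  convexHull ℝ {x | ∃ σ : Fin (Fintype.card (HardJob V P a)) → Fin (Fintype.card (HardJob V P a)),
    makespan (hardTime V P a) σ ≤ (a + 1) * optMakespan (Fintype.card (HardJob V P a))
      (Fintype.card (HardJob V P a)) (hardTime V P a) ∧ x = assignVec σ}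

/-- The total penalty of an assignment relative to the cut `U`, minus one, as an affine function of
the assignment vector. -/
def hardFunctional (U : V → Bool) :
    (Fin (Fintype.card (HardJob V P a)) × Fin (Fintype.card (HardJob V P a)) → ℝ) →ᵃ[ℝ] ℝ :=
  (∑ q : Fin (Fintype.card (HardJob V P a)) × Fin (Fintype.card (HardJob V P a)),
    (hardCost U ((hardEquiv V P a).symm q.2) ((hardEquiv V P a).symm q.1) : ℝ) •
      LinearMap.proj (R := ℝ) (φ := fun _ => ℝ) q).toAffineMap - AffineMap.const ℝ _ 1

omit [DecidableEq P] in
lemma hardFunctional_assignVec (U : V → Bool)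
    (σ : Fin (Fintype.card (HardJob V P a)) → Fin (Fintype.card (HardJob V P a))) :
    hardFunctional U (assignVec σ) = ((∑ j : HardJob V P a,
      hardCost U j ((hardEquiv V P a).symm (σ (hardEquiv V P a j))) : ℕ) : ℝ) - 1 := by
  rw [← Equiv.sum_comp (hardEquiv V P a).symm]
  simp [hardFunctional, assignVec, Fintype.sum_prod_type_right]

lemma hardFunctional_nonneg [Nonempty P] (hcard : Fintype.card V = 2 * Fintype.card P)
    {U : V → Bool} (hU : OddCut U) : ∀ z ∈ hardPolytope V P a, 0 ≤ hardFunctional U z := by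
  have hconv : Convex ℝ {z | 0 ≤ hardFunctional (P := P) (a := a) U z} :=
    (convex_Ici (0 : ℝ)).affine_preimage (hardFunctional U)
  refine fun z hz => convexHull_min (s := {x | ∃ σ, _ ∧ x = assignVec σ}) ?_ hconv hz
  rintro _ ⟨σ, hσ, rfl⟩
  rw [optMakespan_hardTime] at hσ
  have := one_le_sum_hardCost hcard
    (s := fun j => (hardEquiv V P a).symm (σ (hardEquiv V P a j))) (fun i => by
      rw [← load_hardTime, mul_comm]
      exact (Finset.le_sup (f := load (hardTime V P a) σ) (Finset.mem_univ _)).trans hσ) hU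
  change 0 ≤ hardFunctional U (assignVec σ)
  rw [hardFunctional_assignVec, sub_nonneg]
  exact_mod_cast this

lemma exists_mem_hardPolytope [Nonempty P] {φ : V → V} (hφ : PairMerging P φ) :
    ∃ x ∈ hardPolytope V P a, ∀ U, hardFunctional U x = crossCount U φ - 1 := by
  obtain ⟨⟨g, hg⟩, f, hf, hfφ⟩ := hφ
  let σ : Fin (Fintype.card (HardJob V P a)) → Fin (Fintype.card (HardJob V P a)) := fun j =>
    hardEquiv V P a (hardSchedule φ f ((hardEquiv V P a).symm j))
  refine ⟨assignVec σ, subset_convexHull ℝ _ ⟨σ, Finset.sup_le fun i _ => ?_, rfl⟩, fun U => ?_⟩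
  · rw [optMakespan_hardTime, mul_comm]
    obtain ⟨i, rfl⟩ := (hardEquiv V P a).surjective i
    rw [load_hardTime]
    simpa [σ] using hardSchedule_load_le hg hf hfφ i
  · rw [hardFunctional_assignVec]
    have hσ : ∀ j, (hardEquiv V P a).symm (σ (hardEquiv V P a j)) = hardSchedule φ f j :=
      fun j => by simp [σ]
    simp only [hσ, sum_hardCost_hardSchedule]

/-- The extension complexity of the hard polytope bounds the nonnegative rank of the matrix of
crossing numbers minus one. -/
theorem exists_crossCount_factorization [Nonempty P]
    (hcard : Fintype.card V = 2 * Fintype.card P) :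
    ∃ (u : Fin (xc (hardPolytope V P a) + 1) → (V → Bool) → ℝ)
      (v : Fin (xc (hardPolytope V P a) + 1) → (V → V) → ℝ),
      (∀ i U, 0 ≤ u i U) ∧ (∀ i φ, 0 ≤ v i φ) ∧
        ∀ U φ, OddCut U → PairMerging P φ → ∑ i, u i U * v i φ = crossCount U φ - 1 := by
  classical
  have hEF : IsEF (hardPolytope V P a) (xc (hardPolytope V P a)) :=
    isEF_xc_convexHull ((Set.finite_range (assignVec (n := Fintype.card (HardJob V P a))
      (m := Fintype.card (HardJob V P a)))).subset fun _ ⟨σ, _, hx⟩ => ⟨σ, hx.symm⟩)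
  choose x hx hxU using fun φ : {φ : V → V // PairMerging P φ} =>
    exists_mem_hardPolytope (a := a) φ.2
  obtain ⟨v, hv, hfac⟩ := hEF.exists_slack_factorization x hx
  choose u hu huv using fun U : {U : V → Bool // OddCut U} =>
    hfac (hardFunctional U.1) (hardFunctional_nonneg hcard U.2)
  refine ⟨fun i U => if h : OddCut U then u ⟨U, h⟩ i else 0,
    fun i φ => if h : PairMerging P φ then v i ⟨φ, h⟩ else 0, fun i U => ?_, fun i φ => ?_,
    fun U φ hU hφ => ?_⟩
  · dsimp only
    split_ifs
    · exact hu _ _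
    · exact le_rfl
  · dsimp only
    split_ifs
    · exact hv _ _
    · exact le_rfl
  · simp only [hU, hφ, dif_pos]
    rw [← huv ⟨U, hU⟩ ⟨φ, hφ⟩, hxU]

end Scheduling

lemma card_tplVertex_eq (m : ℕ) :
    Fintype.card (TplVertex m) = 2 * Fintype.card (TplPair m) := by
  simp only [TplVertex, TplPair, Fintype.card_prod, Fintype.card_sum, Fintype.card_option,
    Fintype.card_fin, Fintype.card_bool]
  ring

lemma card_hardJob_template (m a : ℕ) :
    Fintype.card (HardJob (TplVertex m) (TplPair m) a) = (6 * m + 10) * (a + 1) + (3 * m + 5) := by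
  simp only [TplVertex, TplPair, Fintype.card_prod, Fintype.card_sum, Fintype.card_option,
    Fintype.card_fin, Fintype.card_bool]
  ring

instance (m : ℕ) : Nonempty (TplPair m) := ⟨.inl 0⟩

lemma exp_le_xc_hardPolytope (m a : ℕ) :
    Real.exp ((m + 1) / 7200) ≤ 36000 * (xc (hardPolytope (TplVertex m) (TplPair m) a) + 1) := by
  obtain ⟨u, v, hu, hv, h⟩ :=
    exists_crossCount_factorization (P := TplPair m) (a := a) (card_tplVertex_eq m)
  simpa using exp_le_of_crossCount_factorization u v hu hv h

lemma two_pow_le_of_exp_le {n : ℕ} (hn : 2 ≤ n) {x : ℝ}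
    (hx : Real.exp (20 * n) ≤ 36000 * (x + 1)) : (2 : ℝ) ^ n ≤ x := by
  have hexp : (2 : ℝ) ^ (20 * n) ≤ Real.exp (20 * n) := by
    have := pow_le_pow_left₀ (by norm_num)
      (Real.exp_one_gt_d9.le.trans' (by norm_num : (2 : ℝ) ≤ _))
      (20 * n)
    rwa [← Real.exp_nat_mul, mul_one, Nat.cast_mul, Nat.cast_ofNat] at this
  have hsplit : (2 : ℝ) ^ (20 * n) = 2 ^ n * 2 ^ (19 * n) := by
    rw [← pow_add]
    congr 1
    ring
  have hbig : (2 : ℝ) ^ 38 ≤ 2 ^ (19 * n) := pow_le_pow_right₀ (by norm_num) (by omega)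
  have hone : (1 : ℝ) ≤ 2 ^ n := one_le_pow₀ (by norm_num)
  nlinarith

/-- For every `n` and every integer `α ≥ 1` there is an instance with `O(α·n)` jobs and
machines and processing times in `{1,2}` such that the convex hull of the assignment
vectors of all `α`-approximate schedules has extension complexity at least
`2^(c·n/log n)`. -/
theorem all_approx_schedules_large_xc :
    ∃ c C : ℝ, 0 < c ∧ 1 ≤ C ∧ ∀ n : ℕ, 2 ≤ n → ∀ α : ℕ, 1 ≤ α →
      ∃ (nJ m : ℕ) (p : Fin nJ → ℕ),
        (nJ : ℝ) ≤ C * α * n ∧ (m : ℝ) ≤ C * α * n ∧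
        (∀ j, p j = 1 ∨ p j = 2) ∧
        (2 : ℝ) ^ (c * n / Real.log n) ≤
          (xc (convexHull ℝ {x : Fin m × Fin nJ → ℝ | ∃ σ : Fin nJ → Fin m,
            makespan p σ ≤ α * optMakespan nJ m p ∧ x = assignVec σ}) : ℝ) := by
  refine ⟨Real.log 2, 2000000, Real.log_pos one_lt_two, by norm_num, fun n hn α hα => ?_⟩
  obtain ⟨a, rfl⟩ := Nat.exists_eq_add_of_le' hα
  have hcard : (Fintype.card (HardJob (TplVertex (144000 * n)) (TplPair (144000 * n)) a) : ℝ) ≤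
      2000000 * (a + 1 : ℕ) * n := by
    rw [card_hardJob_template]
    norm_cast
    nlinarith [Nat.zero_le (a * n), Nat.mul_le_mul_left a hn]
  refine ⟨_, _, hardTime (TplVertex (144000 * n)) (TplPair (144000 * n)) a, hcard, hcard,
    hardTime_eq_one_or_two, ?_⟩
  have hn' : (2 : ℝ) ≤ n := by exact_mod_cast hn
  have hlog : Real.log 2 ≤ Real.log n := Real.log_le_log two_pos hn'
  have hlog2 : 0 < Real.log 2 := Real.log_pos one_lt_two
  calc (2 : ℝ) ^ (Real.log 2 * n / Real.log n) ≤ 2 ^ (n : ℝ) := by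
        refine Real.rpow_le_rpow_of_exponent_le one_le_two ?_
        rw [div_le_iff₀ (hlog2.trans_le hlog), mul_comm]
        gcongr
    _ = 2 ^ n := Real.rpow_natCast 2 n
    _ ≤ xc (hardPolytope (TplVertex (144000 * n)) (TplPair (144000 * n)) a) :=
        two_pow_le_of_exp_le hn ((Real.exp_le_exp.2 (by push_cast; linarith)).trans
          (exp_le_xc_hardPolytope (144000 * n) a))
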